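/- Second fundamental theorem of FC for the Hilfer fractional derivative: let 0 < α < 1, 0 < γ < 1 − α, and let f ∈ C_{-1}(0,∞) be such that I^{1−α−γ}_{0+} f is differentiable on (0,∞), has a finite limit at t = 0+, and d/dt (I^{1−α−γ}_{0+} f) belongs to C_{-1}(0,∞). Then for all t > 0, (I^α_{0+} (I^γ_{0+} d/dt (I^{1−α−γ}_{0+} f)))(t) = f(t) − (I^{1−α−γ}_{0+} f)(0) · h_{α+γ}(t), where (I^{1−α−γ}_{0+} f)(0) = lim_{s→0+} (I^{1−α−γ}_{0+} f)(s). -/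

import Mathlib

open Real Filter MeasureTheory intervalIntegral

/-- The Laplace convolution `(f * g)(t) = ∫_0^t f(t-τ) g(τ) dτ`. -/
noncomputable def lconv (f g : ℝ → ℝ) : ℝ → ℝ :=
  fun t => ∫ τ in (0:ℝ)..t, f (t - τ) * g τ

/-- The space `C_{-1}(0,∞)`: functions representable as `t^p f₁(t)` with `p > -1`
and `f₁` continuous on `[0,∞)`. -/
def CMinusOne (f : ℝ → ℝ) : Prop :=
  ∃ p : ℝ, p > -1 ∧ ∃ f₁ : ℝ → ℝ, ContinuousOn f₁ (Set.Ici 0) ∧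
    ∀ t > (0:ℝ), f t = t ^ p * f₁ t


/-- The power law kernel `h_μ(t) = t^{μ-1}/Γ(μ)`. -/
noncomputable def hpow (μ : ℝ) : ℝ → ℝ := fun t => t ^ (μ - 1) / Real.Gamma μ

/-- The Riemann–Liouville fractional integral of order `μ`:
`(I^μ_{0+} f)(t) = ∫_0^t h_μ(t−τ) f(τ) dτ`. -/
noncomputable def rlInt (μ : ℝ) (f : ℝ → ℝ) : ℝ → ℝ := lconv (hpow μ) f

lemma hpow_pos {μ x : ℝ} (hμ : 0 < μ) (hx : 0 < x) : 0 < hpow μ x := by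
  unfold hpow
  exact div_pos (Real.rpow_pos_of_pos hx _) (Real.Gamma_pos_of_pos hμ)

lemma hpow_nonneg {μ x : ℝ} (hμ : 0 < μ) (hx : 0 ≤ x) : 0 ≤ hpow μ x := by
  unfold hpow
  exact div_nonneg (Real.rpow_nonneg hx _) (Real.Gamma_pos_of_pos hμ).le

lemma hpow_measurable (μ : ℝ) : Measurable (hpow μ) := by
  unfold hpow
  fun_prop

lemma rpow_eq_hpow {μ : ℝ} (hμ : 0 < μ) (x : ℝ) :
    x ^ (μ - 1) = Real.Gamma μ * hpow μ x := by
  unfold hpow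
  field_simp [(Real.Gamma_pos_of_pos hμ).ne']

lemma hpow_one (x : ℝ) : hpow 1 x = 1 := by simp [hpow]

lemma beta_real {a b x : ℝ} (ha : 0 < a) (hb : 0 < b) (hx : 0 < x) :
    ∫ u in (0:ℝ)..x, (x - u) ^ (a - 1) * u ^ (b - 1) =
      x ^ (a + b - 1) * (Real.Gamma a * Real.Gamma b / Real.Gamma (a + b)) := by
  have h := Complex.betaIntegral_scaled (b : ℂ) (a : ℂ) hx
  have h2 := Complex.Gamma_mul_Gamma_eq_betaIntegral (s := (b : ℂ)) (t := (a : ℂ))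
    (by simpa using hb) (by simpa using ha)
  have hG : Real.Gamma (a + b) ≠ 0 := (Real.Gamma_pos_of_pos (by linarith)).ne'
  have h3 : Complex.betaIntegral (b : ℂ) (a : ℂ) =
      ((Real.Gamma a * Real.Gamma b / Real.Gamma (a + b) : ℝ) : ℂ) := by
    rw [← Complex.ofReal_add, Complex.Gamma_ofReal, Complex.Gamma_ofReal,
      Complex.Gamma_ofReal, add_comm b a] at h2
    have hG' : (Real.Gamma (a + b) : ℂ) ≠ 0 := by exact_mod_cast hG
    push_cast
    rw [eq_div_iff hG']
    linear_combination -h2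
  rw [h3] at h
  have h4 : ((∫ u in (0:ℝ)..x, (x - u) ^ (a - 1) * u ^ (b - 1) : ℝ) : ℂ) =
      ((x ^ (a + b - 1) * (Real.Gamma a * Real.Gamma b / Real.Gamma (a + b)) : ℝ) : ℂ) := by
    rw [← intervalIntegral.integral_ofReal, Complex.ofReal_mul, Complex.ofReal_cpow hx.le]
    have e : (((a + b - 1 : ℝ)) : ℂ) = (b : ℂ) + a - 1 := by push_cast; ring
    rw [e, ← h]
    apply intervalIntegral.integral_congr
    intro u hu
    rw [Set.uIcc_of_le hx.le] at hu
    simp only []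
    rw [Complex.ofReal_mul, Complex.ofReal_cpow (by linarith [hu.2]), Complex.ofReal_cpow hu.1]
    push_cast
    ring
  exact_mod_cast h4

lemma rlInt_hpow {a b x : ℝ} (ha : 0 < a) (hb : 0 < b) (hx : 0 < x) :
    rlInt a (hpow b) x = hpow (a + b) x := by
  unfold rlInt lconv hpow
  have h := beta_real ha hb hx
  have hGa := (Real.Gamma_pos_of_pos ha).ne'
  have hGb := (Real.Gamma_pos_of_pos hb).ne'
  have e : ∀ u : ℝ, (x - u) ^ (a - 1) / Real.Gamma a * (u ^ (b - 1) / Real.Gamma b) =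
    (x - u) ^ (a - 1) * u ^ (b - 1) * (1 / (Real.Gamma a * Real.Gamma b)) := by
    intro u; field_simp
  simp_rw [e]
  rw [intervalIntegral.integral_mul_const, h]
  field_simp

lemma hpow_conv_integrable {a b x : ℝ} (ha : 0 < a) (hb : 0 < b) (hx : 0 < x) :
    IntervalIntegrable (fun u => hpow a (x - u) * hpow b u) volume 0 x := by
  by_contra h
  have h1 := rlInt_hpow ha hb hx
  have h2 := hpow_pos (μ := a + b) (by linarith) hx
  unfold rlInt lconv at h1
  rw [intervalIntegral.integral_undef h] at h1
  linarith

lemma beta_shift {a b s t : ℝ} (ha : 0 < a) (hb : 0 < b) (hst : s < t) :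
    ∫ τ in s..t, hpow a (t - τ) * hpow b (τ - s) = hpow (a + b) (t - s) := by
  have h := rlInt_hpow ha hb (sub_pos.2 hst)
  rw [← h]
  unfold rlInt lconv
  have := intervalIntegral.integral_comp_sub_right (a := s) (b := t)
    (fun u => hpow a (t - s - u) * hpow b u) s
  rw [sub_self] at this
  rw [← this]
  congr 1; ext u; congr 2; ring

lemma beta_shift_integrable {a b s t : ℝ} (ha : 0 < a) (hb : 0 < b) (hst : s < t) :
    IntervalIntegrable (fun τ => hpow a (t - τ) * hpow b (τ - s)) volume s t := by
  by_contra h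
  have h1 := beta_shift ha hb hst
  have h2 := hpow_pos (μ := a + b) (by linarith) (sub_pos.2 hst)
  rw [intervalIntegral.integral_undef h] at h1
  linarith

lemma CMinusOne.continuousOn {g : ℝ → ℝ} (hg : CMinusOne g) : ContinuousOn g (Set.Ioi 0) := by
  obtain ⟨p, hp, g₁, hc, he⟩ := hg
  have : ContinuousOn (fun t : ℝ => t ^ p * g₁ t) (Set.Ioi 0) := by
    apply ContinuousOn.mul
    · intro t ht
      exact (Real.continuousAt_rpow_const t p (Or.inl (ne_of_gt ht))).continuousWithinAt
    · exact hc.mono Set.Ioi_subset_Ici_self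
  exact this.congr he

lemma CMinusOne.aesm {g : ℝ → ℝ} (hg : CMinusOne g) (t : ℝ) :
    AEStronglyMeasurable g (volume.restrict (Set.Ioo 0 t)) :=
  (hg.continuousOn.mono Set.Ioo_subset_Ioi_self).aestronglyMeasurable measurableSet_Ioo

lemma CMinusOne.bound {g : ℝ → ℝ} (hg : CMinusOne g) (t : ℝ) :
    ∃ q C : ℝ, 0 < q ∧ 0 ≤ C ∧ ∀ s ∈ Set.Ioo 0 t, |g s| ≤ C * hpow q s := by
  obtain ⟨p, hp, g₁, hc, he⟩ := hg
  obtain ⟨M, hM⟩ := (isCompact_Icc (a := (0:ℝ)) (b := t)).exists_bound_of_continuousOn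
    (hc.mono Set.Icc_subset_Ici_self)
  have hG := Real.Gamma_pos_of_pos (s := p + 1) (by linarith)
  refine ⟨p + 1, |M| * Real.Gamma (p + 1), by linarith, by positivity, ?_⟩
  intro s hs
  have h1 := hM s ⟨hs.1.le, hs.2.le⟩
  have h2 := rpow_eq_hpow (μ := p + 1) (by linarith) s
  rw [add_sub_cancel_right] at h2
  rw [mul_assoc, ← h2, he s hs.1, abs_mul, abs_of_nonneg (Real.rpow_nonneg hs.1.le _), mul_comm]
  exact mul_le_mul_of_nonneg_right (h1.trans (le_abs_self M)) (Real.rpow_nonneg hs.1.le _)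

lemma CMinusOne.conv_integrable {g : ℝ → ℝ} (hg : CMinusOne g) {μ t : ℝ} (hμ : 0 < μ)
    (ht : 0 < t) : IntervalIntegrable (fun s => hpow μ (t - s) * g s) volume 0 t := by
  obtain ⟨q, C, hq, hC, hb⟩ := hg.bound t
  have h1 := (hpow_conv_integrable hμ hq ht).const_mul C
  rw [intervalIntegrable_iff_integrableOn_Ioo_of_le ht.le] at h1 ⊢
  refine Integrable.mono' h1 ?_ ?_
  · exact (((hpow_measurable μ).comp (measurable_const.sub measurable_id)).aestronglyMeasurable).mul
      (hg.aesm t)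
  · filter_upwards [ae_restrict_mem measurableSet_Ioo] with s hs
    have h0 := hpow_nonneg hμ (sub_pos.2 hs.2).le
    rw [Real.norm_eq_abs, abs_mul, abs_of_nonneg h0]
    calc _ ≤ hpow μ (t - s) * (C * hpow q s) := mul_le_mul_of_nonneg_left (hb s hs) h0
      _ = _ := by ring

lemma rlInt_one (g : ℝ → ℝ) (t : ℝ) : rlInt 1 g t = ∫ s in (0:ℝ)..t, g s := by
  simp [rlInt, lconv, hpow_one]

lemma CMinusOne.integrable {g : ℝ → ℝ} (hg : CMinusOne g) {t : ℝ} 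
    (ht : 0 < t) : IntervalIntegrable g volume 0 t := by
  simpa [hpow_one] using hg.conv_integrable (μ := 1) one_pos ht

lemma rlInt_congr {g g' : ℝ → ℝ} (h : ∀ t > 0, g t = g' t) (μ : ℝ) {t : ℝ} (ht : 0 < t) :
    rlInt μ g t = rlInt μ g' t := by
  unfold rlInt lconv
  rw [intervalIntegral.integral_of_le ht.le, intervalIntegral.integral_of_le ht.le]
  apply setIntegral_congr_fun measurableSet_Ioc
  intro s hs
  simp only []
  rw [h s hs.1]

lemma CMinusOne_hpow {μ : ℝ} (hμ : 0 < μ) : CMinusOne (hpow μ) :=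
  ⟨μ - 1, by linarith, fun _ => 1 / Real.Gamma μ, continuousOn_const, fun t _ => by
    simp [hpow, div_eq_mul_inv]⟩

lemma CMinusOne.rlInt {g : ℝ → ℝ} (hg : CMinusOne g) {μ : ℝ} (hμ : 0 < μ) :
    CMinusOne (rlInt μ g) := by
  obtain ⟨p, hp, g₁, hc, he⟩ := hg
  refine ⟨μ + p, by linarith, fun t => ∫ u in (0:ℝ)..1, hpow μ (1 - u) * u ^ p * g₁ (t * u), ?_, ?_⟩
  · intro t₀ ht₀
    obtain ⟨M, hM⟩ := (isCompact_Icc (a := (0:ℝ)) (b := t₀ + 1)).exists_bound_of_continuousOn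
      (hc.mono Set.Icc_subset_Ici_self)
    have hint : IntervalIntegrable (fun u => hpow μ (1 - u) * u ^ p) volume 0 1 := by
      have h := (hpow_conv_integrable hμ (b := p + 1) (by linarith) one_pos).const_mul
        (Real.Gamma (p + 1))
      refine h.congr ?_
      intro u _
      simp only []
      have h2 := rpow_eq_hpow (μ := p + 1) (by linarith) u
      rw [add_sub_cancel_right] at h2
      rw [h2]; ring
    have hnb : ∀ᶠ t in nhdsWithin t₀ (Set.Ici 0), t ∈ Set.Icc 0 (t₀ + 1) := by
      filter_upwards [self_mem_nhdsWithin, mem_nhdsWithin_of_mem_nhds (Iio_mem_nhds (lt_add_one t₀))]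
        with t h1 h2 using ⟨h1, le_of_lt h2⟩
    have huI : Set.uIoc (0:ℝ) 1 = Set.Ioc 0 1 := Set.uIoc_of_le zero_le_one
    refine intervalIntegral.continuousWithinAt_of_dominated_interval
      (bound := fun u => |hpow μ (1 - u) * u ^ p| * |M|) ?_ ?_ (hint.abs.mul_const _) ?_
    · filter_upwards [hnb] with t ht
      rw [huI]
      have : ContinuousOn (fun u => g₁ (t * u)) (Set.Ioc 0 1) := by
        refine hc.comp (by fun_prop) ?_
        intro u hu
        exact mul_nonneg ht.1 hu.1.le
      refine AEStronglyMeasurable.mul ?_ (this.aestronglyMeasurable measurableSet_Ioc)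
      have := hpow_measurable μ
      exact Measurable.aestronglyMeasurable (by fun_prop)
    · filter_upwards [hnb] with t ht
      refine Eventually.of_forall fun u hu => ?_
      rw [huI] at hu
      rw [Real.norm_eq_abs, abs_mul]
      refine mul_le_mul_of_nonneg_left ?_ (abs_nonneg _)
      refine (hM (t * u) ⟨mul_nonneg ht.1 hu.1.le, ?_⟩).trans (le_abs_self M)
      nlinarith [ht.1, ht.2, hu.1, hu.2]
    · refine Eventually.of_forall fun u hu => ?_
      rw [huI] at hu
      refine ContinuousWithinAt.mul continuousWithinAt_const ?_
      refine ContinuousWithinAt.comp (t := Set.Ici 0) (hc _ (mul_nonneg ht₀ hu.1.le))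
        (by fun_prop) ?_
      intro t ht
      exact mul_nonneg ht hu.1.le
  · intro t ht
    unfold _root_.rlInt lconv
    have h := intervalIntegral.smul_integral_comp_mul_left (a := 0) (b := 1)
      (fun τ => hpow μ (t - τ) * g τ) t
    rw [mul_zero, mul_one] at h
    rw [← h, smul_eq_mul, ← intervalIntegral.integral_const_mul,
      ← intervalIntegral.integral_const_mul,
      intervalIntegral.integral_of_le zero_le_one, intervalIntegral.integral_of_le zero_le_one]
    apply setIntegral_congr_fun measurableSet_Ioc
    intro u hu
    simp only []
    rw [he (t * u) (mul_pos ht hu.1)]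
    unfold hpow
    rw [show t - t * u = t * (1 - u) by ring, Real.mul_rpow ht.le (by linarith [hu.2]),
      Real.mul_rpow ht.le hu.1.le, Real.rpow_add ht, Real.rpow_sub_one ht.ne']
    field_simp

lemma rlInt_rlInt {g : ℝ → ℝ} (hg : CMinusOne g) {a b t : ℝ} (ha : 0 < a) (hb : 0 < b)
    (ht : 0 < t) : rlInt a (rlInt b g) t = rlInt (a + b) g t := by
  set ν : Measure ℝ := volume.restrict (Set.Ioo 0 t) with hν
  let K : ℝ → ℝ → ℝ := fun τ s =>
    (Set.Ioi s).indicator (fun τ => hpow a (t - τ) * hpow b (τ - s)) τ * g s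
  have hK1 : ∀ τ ∈ Set.Ioo 0 t, ∫ s, K τ s ∂ν = hpow a (t - τ) * rlInt b g τ := by
    intro τ hτ
    unfold rlInt lconv
    rw [intervalIntegral.integral_of_le hτ.1.le, integral_Ioc_eq_integral_Ioo,
      ← MeasureTheory.integral_const_mul]
    have : ∀ s, K τ s = (Set.Iio τ).indicator
        (fun s => hpow a (t - τ) * (hpow b (τ - s) * g s)) s := by
      intro s
      by_cases h : s < τ
      · simp [K, h, mul_assoc]
      · simp [K, h]
    simp_rw [this]
    rw [MeasureTheory.integral_indicator measurableSet_Iio, hν, Measure.restrict_restrict measurableSet_Iio]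
    congr 2
    ext s
    simp only [Set.mem_inter_iff, Set.mem_Iio, Set.mem_Ioo]
    constructor
    · rintro ⟨h1, h2, h3⟩; exact ⟨h2, h1⟩
    · rintro ⟨h1, h2⟩; exact ⟨h2, h1, h2.trans hτ.2⟩
  have hset : ∀ s ∈ Set.Ioo 0 t, Set.Ioi s ∩ Set.Ioo 0 t = Set.Ioo s t := by
    intro s hs
    ext τ
    simp only [Set.mem_inter_iff, Set.mem_Ioi, Set.mem_Ioo]
    constructor
    · rintro ⟨h1, h2, h3⟩; exact ⟨h1, h3⟩
    · rintro ⟨h1, h2⟩; exact ⟨h1, hs.1.trans h1, h2⟩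
  have hI : ∀ s ∈ Set.Ioo 0 t,
      ∫ τ, (Set.Ioi s).indicator (fun τ => hpow a (t - τ) * hpow b (τ - s)) τ ∂ν =
        hpow (a + b) (t - s) := by
    intro s hs
    rw [MeasureTheory.integral_indicator measurableSet_Ioi, hν, Measure.restrict_restrict measurableSet_Ioi,
      hset s hs, ← integral_Ioc_eq_integral_Ioo, ← intervalIntegral.integral_of_le hs.2.le,
      beta_shift ha hb hs.2]
  have hK2 : ∀ s ∈ Set.Ioo 0 t, ∫ τ, K τ s ∂ν = hpow (a + b) (t - s) * g s := by
    intro s hs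
    simp only [K]
    rw [MeasureTheory.integral_mul_const, hI s hs]
  have hmeas : AEStronglyMeasurable (Function.uncurry K) (ν.prod ν) := by
    have h1 : AEStronglyMeasurable (fun z : ℝ × ℝ => g z.2) (ν.prod ν) := (hg.aesm t).comp_snd
    refine AEStronglyMeasurable.mul (Measurable.aestronglyMeasurable ?_) h1
    have : (fun z : ℝ × ℝ => (Set.Ioi z.2).indicator
        (fun τ => hpow a (t - τ) * hpow b (τ - z.2)) z.1) =
        {z : ℝ × ℝ | z.2 < z.1}.indicator
          (fun z => hpow a (t - z.1) * hpow b (z.1 - z.2)) := by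
      ext z
      simp [Set.indicator]
    have h2 := hpow_measurable a
    have h3 := hpow_measurable b
    change Measurable (fun z : ℝ × ℝ => (Set.Ioi z.2).indicator
        (fun τ => hpow a (t - τ) * hpow b (τ - z.2)) z.1)
    rw [this]
    exact Measurable.indicator (by fun_prop) (measurableSet_lt measurable_snd measurable_fst)
  have hint : Integrable (Function.uncurry K) (ν.prod ν) := by
    rw [integrable_prod_iff' hmeas]
    constructor
    · filter_upwards [ae_restrict_mem measurableSet_Ioo] with s hs
      simp only [Function.uncurry, K]
      refine Integrable.mul_const ?_ _
      rw [integrable_indicator_iff measurableSet_Ioi, IntegrableOn, hν,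
        Measure.restrict_restrict measurableSet_Ioi, hset s hs]
      exact (intervalIntegrable_iff_integrableOn_Ioo_of_le hs.2.le).1
        (beta_shift_integrable ha hb hs.2)
    · have h1 := (hg.conv_integrable (μ := a + b) (by linarith) ht).norm
      rw [intervalIntegrable_iff_integrableOn_Ioo_of_le ht.le] at h1
      refine Integrable.congr h1 ?_
      filter_upwards [ae_restrict_mem measurableSet_Ioo] with s hs
      simp only [Function.uncurry, K, norm_mul]
      rw [MeasureTheory.integral_mul_const]
      congr 1
      rw [Real.norm_of_nonneg (hpow_nonneg (by linarith) (sub_pos.2 hs.2).le), ← hI s hs]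
      apply MeasureTheory.integral_congr_ae
      filter_upwards [ae_restrict_mem measurableSet_Ioo] with τ hτ
      rw [Real.norm_of_nonneg]
      refine Set.indicator_apply_nonneg fun h => ?_
      exact mul_nonneg (hpow_nonneg ha (sub_pos.2 hτ.2).le) (hpow_nonneg hb (sub_pos.2 h).le)
  have hswap := integral_integral_swap hint
  have e1 : rlInt a (rlInt b g) t = ∫ τ, ∫ s, K τ s ∂ν ∂ν := by
    conv_lhs => unfold rlInt lconv
    rw [intervalIntegral.integral_of_le ht.le, integral_Ioc_eq_integral_Ioo]
    exact setIntegral_congr_fun measurableSet_Ioo fun τ hτ => (hK1 τ hτ).symm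
  have e2 : rlInt (a + b) g t = ∫ s, ∫ τ, K τ s ∂ν ∂ν := by
    unfold rlInt lconv
    rw [intervalIntegral.integral_of_le ht.le, integral_Ioc_eq_integral_Ioo]
    exact setIntegral_congr_fun measurableSet_Ioo fun s hs => (hK2 s hs).symm
  rw [e1, e2, hswap]

/-- Second fundamental theorem of FC for the Hilfer fractional derivative: for
`0 < α < 1`, `0 < γ < 1 − α`, and `f ∈ C_{-1}(0,∞)` such that `I^{1−α−γ}_{0+} f`
is differentiable on `(0,∞)`, has finite limit `c = (I^{1−α−γ}_{0+} f)(0)` at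
`0+`, and `d/dt (I^{1−α−γ}_{0+} f) ∈ C_{-1}(0,∞)`, one has
`(I^α_{0+} (I^γ_{0+} d/dt (I^{1−α−γ}_{0+} f)))(t) = f(t) − (I^{1−α−γ}_{0+} f)(0) h_{α+γ}(t)`
for all `t > 0`. -/
theorem second_fundamental_theorem_Hilfer (α γ : ℝ) (f : ℝ → ℝ) (c : ℝ)
    (hα : 0 < α) (hα1 : α < 1) (hγ : 0 < γ) (hγ1 : γ < 1 - α)
    (hf : CMinusOne f)
    (hdiff : ∀ t > (0:ℝ), DifferentiableAt ℝ (rlInt (1 - α - γ) f) t)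
    (hlim : Tendsto (rlInt (1 - α - γ) f) (nhdsWithin 0 (Set.Ioi 0)) (nhds c))
    (hder : CMinusOne (deriv (rlInt (1 - α - γ) f))) :
    ∀ t > (0:ℝ),
      rlInt α (rlInt γ (deriv (rlInt (1 - α - γ) f))) t =
        f t - c * hpow (α + γ) t := by

  have hβ : 0 < α + γ := by linarith
  have hδ : 0 < 1 - α - γ := by linarith
  set F := rlInt (1 - α - γ) f with hF
  set g := deriv F with hgdef
  -- fundamental theorem of calculus for `F`
  have hFTC : ∀ t > (0:ℝ), rlInt 1 g t = F t - c := by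
    intro t ht
    rw [rlInt_one]
    refine intervalIntegral.integral_eq_sub_of_hasDerivAt_of_tendsto ht
      (fun x hx => (hdiff x hx.1).hasDerivAt) (hder.integrable ht) hlim ?_
    exact (hdiff t ht).continuousAt.tendsto.mono_left nhdsWithin_le_nhds
  have hG : CMinusOne (rlInt (α + γ) g) := hder.rlInt hβ
  have hH : CMinusOne (hpow (α + γ)) := CMinusOne_hpow hβ
  have hFC : CMinusOne F := hf.rlInt hδ
  let D : ℝ → ℝ := fun t => rlInt (α + γ) g t - (f t - c * hpow (α + γ) t)
  have hDint : ∀ t > (0:ℝ), IntervalIntegrable D volume 0 t := fun t ht =>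
    (hG.integrable ht).sub ((hf.integrable ht).sub ((hH.integrable ht).const_mul c))
  have hDc : ContinuousOn D (Set.Ioi 0) :=
    hG.continuousOn.sub (hf.continuousOn.sub (continuousOn_const.mul hH.continuousOn))
  have hD0 : ∀ t > (0:ℝ), ∫ s in (0:ℝ)..t, D s = 0 := by
    intro t ht
    have e1 : ∫ s in (0:ℝ)..t, rlInt (α + γ) g s = rlInt (α + γ) (rlInt 1 g) t := by
      rw [← rlInt_one, rlInt_rlInt hder one_pos hβ ht, rlInt_rlInt hder hβ one_pos ht, add_comm]
    have e2 : rlInt (α + γ) (rlInt 1 g) t = rlInt (α + γ) F t - c * hpow (α + γ + 1) t := by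
      rw [rlInt_congr (g' := fun s => F s - c * hpow 1 s)
        (fun s hs => by rw [hFTC s hs, hpow_one, mul_one]) _ ht,
        ← rlInt_hpow hβ one_pos ht]
      conv_lhs => unfold rlInt lconv
      conv_rhs => unfold rlInt lconv
      rw [← intervalIntegral.integral_const_mul, ← intervalIntegral.integral_sub
        (hFC.conv_integrable hβ ht) ((hpow_conv_integrable hβ one_pos ht).const_mul c)]
      congr 1; ext s; ring
    have e3 : rlInt (α + γ) F t = ∫ s in (0:ℝ)..t, f s := by
      rw [hF, rlInt_rlInt hf hβ hδ ht, ← rlInt_one]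
      congr 1; ring
    have e4 : hpow (α + γ + 1) t = ∫ s in (0:ℝ)..t, hpow (α + γ) s := by
      rw [← rlInt_one, rlInt_hpow one_pos hβ ht, add_comm]
    simp only [D]
    rw [intervalIntegral.integral_sub (hG.integrable ht)
      ((hf.integrable ht).sub ((hH.integrable ht).const_mul c)),
      intervalIntegral.integral_sub (hf.integrable ht) ((hH.integrable ht).const_mul c),
      intervalIntegral.integral_const_mul, e1, e2, e3, e4]
    ring
  intro t ht
  have hd := intervalIntegral.integral_hasDerivAt_right (hDint t ht)
    (hDc.stronglyMeasurableAtFilter isOpen_Ioi t ht) (hDc.continuousAt (Ioi_mem_nhds ht))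
  have hz : HasDerivAt (fun u => ∫ s in (0:ℝ)..u, D s) 0 t := by
    refine (hasDerivAt_const t (0:ℝ)).congr_of_eventuallyEq ?_
    filter_upwards [Ioi_mem_nhds ht] with u hu using hD0 u hu
  have hDt : D t = 0 := hd.unique hz
  rw [rlInt_rlInt hder hα hγ ht]
  exact sub_eq_zero.1 hDt
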